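/- Let d ≥ 2 and g ≥ 3 be integers and let H be a d-regular simple graph whose girth equals g. Then φ(K1∇H) · d · g ≤ e(H) · (d + g − 1); equivalently, φ(K1∇H) ≤ e(H)(1/d + 1/g − 1/(dg)). -/

import Mathlib

/-!
If `w` weights the edges of a graph so that every cycle has total weight at least `k`, then edge
disjointness bounds the size of any cycle packing by `w(E) / k`. On `K₁ ∇ H` give each edge at the
apex weight `g - 1` and each edge of `H` weight `2`. A cycle through the apex uses two edges at the
apex and at least one edge of `H`, and a cycle avoiding it uses at least `g` edges of `H`, so every
cycle weighs at least `2g`, while the total weight is `(g - 1)|V| + 2e(H)`. Counting edges by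
degrees eliminates `|V|`, since `|V|d ≤ 2e(H)` when the average degree is at least `d`.
-/

open scoped Classical

namespace PaperEDC

/-- `G` contains `m` pairwise edge-disjoint cycles. -/
def HasEDC {V : Type*} (G : SimpleGraph V) (m : ℕ) : Prop :=
  ∃ c : Fin m → Σ v : V, G.Walk v v,
    (∀ i, (c i).2.IsCycle) ∧
    ∀ i j, i ≠ j → ∀ e ∈ (c i).2.edges, e ∉ (c j).2.edges

/-- `φ(G)`: the maximum number of pairwise edge-disjoint cycles in `G`. -/
noncomputable def phi {V : Type*} (G : SimpleGraph V) : ℕ := sSup {m | HasEDC G m}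

/-- `K₁ ∇ H`: the join of a single new vertex with `H`. -/
def joinK1 {V : Type*} (H : SimpleGraph V) : SimpleGraph (Option V) :=
  SimpleGraph.fromRel fun a b => a = none ∨ ∃ u v, a = some u ∧ b = some v ∧ H.Adj u v

/-- `t(G)`: the number of triangles of `G`. -/
noncomputable def triCount {V : Type*} (G : SimpleGraph V) : ℕ :=
  Nat.card {s : Finset V // G.IsNClique 3 s}

/-- A triangle-cactus: a connected graph in which every edge lies on a cycle and every
cycle is a triangle. -/
def IsTriangleCactus {V : Type*} (G : SimpleGraph V) : Prop :=
  G.Connected ∧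
  (∀ e ∈ G.edgeSet, ∃ (v : V) (w : G.Walk v v), w.IsCycle ∧ e ∈ w.edges) ∧
  ∀ (v : V) (w : G.Walk v v), w.IsCycle → w.length = 3

/-- `e(G)`: the number of edges of `G`. -/
noncomputable def ecard {V : Type*} (G : SimpleGraph V) : ℕ := Nat.card G.edgeSet

/-- `ρ(G)`: the spectral radius (largest adjacency eigenvalue) of `G`. -/
noncomputable def specRad {V : Type*} [Fintype V] (G : SimpleGraph V) : ℝ :=
  sSup {x : ℝ | ∃ f : V → ℝ, f ≠ 0 ∧ ∀ v : V, ∑ u : V, (if G.Adj v u then f u else 0) = x * f v}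

open SimpleGraph

section WeightDuality

variable {V : Type*} {G : SimpleGraph V} [Fintype G.edgeSet]

theorem HasEDC.mul_le_sum_weight {m : ℕ} (hm : HasEDC G m) (w : Sym2 V → ℕ) {k : ℕ}
    (hw : ∀ (v : V) (c : G.Walk v v), c.IsCycle → k ≤ (c.edges.map w).sum) :
    m * k ≤ ∑ e ∈ G.edgeFinset, w e := by
  obtain ⟨c, hc, hdisj⟩ := hm
  have hpairwise : ((Finset.univ : Finset (Fin m)) : Set (Fin m)).PairwiseDisjoint
      fun i ↦ (c i).2.edges.toFinset := fun i _ j _ hij ↦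
    List.disjoint_toFinset_iff_disjoint.2 fun e hi hj ↦ hdisj i j hij e hi hj
  have hsubset : Finset.univ.biUnion (fun i ↦ (c i).2.edges.toFinset) ⊆ G.edgeFinset := by
    intro e he
    obtain ⟨i, -, hi⟩ := Finset.mem_biUnion.1 he
    exact mem_edgeFinset.2 ((c i).2.edges_subset_edgeSet (List.mem_toFinset.1 hi))
  calc m * k = ∑ _i : Fin m, k := by simp
    _ ≤ ∑ i, ((c i).2.edges.map w).sum := Finset.sum_le_sum fun i _ ↦ hw _ _ (hc i)
    _ = ∑ i, ∑ e ∈ (c i).2.edges.toFinset, w e :=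
      Finset.sum_congr rfl fun i _ ↦ (List.sum_toFinset w (hc i).edges_nodup).symm
    _ = ∑ e ∈ Finset.univ.biUnion (fun i ↦ (c i).2.edges.toFinset), w e :=
      (Finset.sum_biUnion hpairwise).symm
    _ ≤ ∑ e ∈ G.edgeFinset, w e := Finset.sum_le_sum_of_subset hsubset

theorem phi_mul_le_sum_weight (w : Sym2 V → ℕ) {k : ℕ}
    (hw : ∀ (v : V) (c : G.Walk v v), c.IsCycle → k ≤ (c.edges.map w).sum) :
    phi G * k ≤ ∑ e ∈ G.edgeFinset, w e := by
  rcases k.eq_zero_or_pos with rfl | hk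
  · simp
  · exact (Nat.le_div_iff_mul_le hk).1 <| csSup_le' fun m hm ↦
      (Nat.le_div_iff_mul_le hk).2 (hm.mul_le_sum_weight w hw)

end WeightDuality

theorem exists_eq_cons_concat_of_isCycle {V : Type*} {G : SimpleGraph V} {v : V}
    {c : G.Walk v v} (hc : c.IsCycle) :
    ∃ (a b : V) (h : G.Adj v a) (p : G.Walk a b) (h' : G.Adj b v),
      c = Walk.cons h (p.concat h') ∧ v ∉ p.support ∧ a ≠ b := by
  cases c with
  | nil => exact (hc.ne_nil rfl).elim
  | @cons _ a _ h q =>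
    obtain ⟨hpath, hedge⟩ := (Walk.cons_isCycle_iff q h).1 hc
    cases q with
    | nil => exact (G.irrefl h).elim
    | cons k r =>
      obtain ⟨b, p, h', hq⟩ := Walk.exists_cons_eq_concat k r
      rw [hq] at hpath hedge ⊢
      refine ⟨a, b, h, p, h', rfl, ((Walk.concat_isPath_iff h').1 hpath).2, ?_⟩
      rintro rfl
      simp [Walk.edges_concat, Sym2.eq_swap] at hedge

theorem egirth_induce_le_length {V : Type*} {G : SimpleGraph V} {s : Set V} {v : V}
    {c : G.Walk v v} (hc : c.IsCycle) (hs : ∀ x ∈ c.support, x ∈ s) :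
    (G.induce s).egirth ≤ c.length := by
  have hmap := Walk.map_induce c hs
  have hcycle : (c.induce s hs).IsCycle :=
    (Walk.isCycle_map_iff_of_injective (Embedding.induce (G := G) s).injective).1 (hmap.symm ▸ hc)
  have hlength : (c.induce s hs).length = c.length :=
    (Walk.length_map _ _).symm.trans (congrArg Walk.length hmap)
  exact hlength ▸ egirth_le_length hcycle

section Join

variable {V : Type*} (H : SimpleGraph V)

@[simp]
theorem joinK1_adj_some_some {u v : V} : (joinK1 H).Adj (some u) (some v) ↔ H.Adj u v := by
  simp only [joinK1, fromRel_adj]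
  grind [H.symm, SimpleGraph.irrefl, SimpleGraph.Adj.symm]

@[simp]
theorem joinK1_adj_none {x : Option V} : (joinK1 H).Adj none x ↔ x ≠ none := by
  simp [joinK1, eq_comm]

/-- Deleting the apex from `K₁ ∇ H` recovers `H`. -/
def joinK1InduceIso : (joinK1 H).induce {x | x.isSome} ≃g H where
  toEquiv := Equiv.optionIsSomeEquiv V
  map_rel_iff' := by
    rintro ⟨x, hx⟩ ⟨y, hy⟩
    obtain ⟨u, rfl⟩ := Option.isSome_iff_exists.1 hx
    obtain ⟨v, rfl⟩ := Option.isSome_iff_exists.1 hy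
    simp [Equiv.optionIsSomeEquiv]

variable {H} in
theorem egirth_le_length_of_none_notMem_support {x : Option V} {c : (joinK1 H).Walk x x}
    (hc : c.IsCycle) (hnone : none ∉ c.support) : H.egirth ≤ c.length := by
  rw [← (joinK1InduceIso H).egirth_eq]
  exact egirth_induce_le_length hc fun y hy ↦ Option.isSome_iff_ne_none.2 fun h ↦ hnone (h ▸ hy)

theorem degree_joinK1_none [Fintype V] : (joinK1 H).degree none = Fintype.card V := by
  have hneighbor : (joinK1 H).neighborFinset none = Finset.univ.erase none := by
    ext x
    simp
  rw [← card_neighborFinset_eq_degree, hneighbor, Finset.card_erase_of_mem (Finset.mem_univ _),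
    Finset.card_univ, Fintype.card_option, Nat.add_sub_cancel]

theorem card_filter_none_notMem_edgeFinset_joinK1 [Fintype V] :
    ((joinK1 H).edgeFinset.filter (none ∉ ·)).card = ecard H := by
  have himage : (joinK1 H).edgeFinset.filter (none ∉ ·) = H.edgeFinset.image (Sym2.map some) := by
    ext e
    simp only [Finset.mem_filter, Finset.mem_image, mem_edgeFinset]
    constructor
    · induction e with
      | _ x y =>
        rintro ⟨hadj, hnone⟩
        obtain ⟨hx, hy⟩ : none ≠ x ∧ none ≠ y := by simpa using hnone
        obtain ⟨u, rfl⟩ := Option.ne_none_iff_exists'.1 hx.symm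
        obtain ⟨v, rfl⟩ := Option.ne_none_iff_exists'.1 hy.symm
        exact ⟨s(u, v), (joinK1_adj_some_some H).1 hadj, rfl⟩
    · rintro ⟨e, he, rfl⟩
      induction e with
      | _ u v => exact ⟨(joinK1_adj_some_some H).2 he, by simp⟩
  rw [himage, Finset.card_image_of_injective _ (Sym2.map.injective (Option.some_injective V)),
    ecard, Nat.card_eq_fintype_card, edgeFinset_card]

/-- The edge weighting of `K₁ ∇ H` giving weight `a` to every edge at the apex and weight `b` to
every edge of `H`. With `a = g - 1` and `b = 2` it is a fractional dual certificate
for the packing of cycles. -/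
noncomputable def apexWeight (a b : ℕ) (e : Sym2 (Option V)) : ℕ := if none ∈ e then a else b

theorem sum_apexWeight [Fintype V] (a b : ℕ) :
    ∑ e ∈ (joinK1 H).edgeFinset, apexWeight a b e = a * Fintype.card V + b * ecard H := by
  simp only [apexWeight, Finset.sum_ite, Finset.sum_const, smul_eq_mul]
  rw [← incidenceFinset_eq_filter, card_incidenceFinset_eq_degree, degree_joinK1_none,
    card_filter_none_notMem_edgeFinset_joinK1, mul_comm a, mul_comm b]

variable {H}

theorem sum_map_apexWeight_edges_of_none_notMem_support (a b : ℕ) {x y : Option V}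
    {p : (joinK1 H).Walk x y} (hnone : none ∉ p.support) :
    (p.edges.map (apexWeight a b)).sum = p.length * b := by
  have hconst : p.edges.map (apexWeight a b) = p.edges.map fun _ ↦ b :=
    List.map_congr_left fun e he ↦ if_neg fun h ↦ hnone (Walk.mem_support_of_mem_edges he h)
  simp [hconst]

theorem two_mul_add_le_sum_map_apexWeight_edges (a b : ℕ) {x : Option V}
    {c : (joinK1 H).Walk x x} (hc : c.IsCycle) (hnone : none ∈ c.support) :
    2 * a + b ≤ (c.edges.map (apexWeight a b)).sum := by
  rw [← ((c.rotate_edges none hnone).perm.map _).sum_eq]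
  obtain ⟨y, z, h, p, h', hrotate, hp, hne⟩ :=
    exists_eq_cons_concat_of_isCycle (hc.rotate hnone)
  have hlength : 0 < p.length := Nat.pos_of_ne_zero fun h0 ↦ hne (Walk.eq_of_length_eq_zero h0)
  have hmiddle : b ≤ p.length * b := Nat.le_mul_of_pos_left b hlength
  simp only [hrotate, Walk.edges_cons, Walk.edges_concat, List.concat_eq_append, List.map_cons,
    List.map_append, List.sum_cons, List.sum_append, List.map_nil, List.sum_nil,
    sum_map_apexWeight_edges_of_none_notMem_support a b hp]
  simp only [apexWeight, Sym2.mem_iff, true_or, or_true, if_true]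
  lia

theorem two_mul_le_sum_map_apexWeight_edges {g : ℕ} (hg : (g : ℕ∞) ≤ H.egirth) {x : Option V}
    {c : (joinK1 H).Walk x x} (hc : c.IsCycle) :
    2 * g ≤ (c.edges.map (apexWeight (g - 1) 2)).sum := by
  by_cases hnone : none ∈ c.support
  · have := two_mul_add_le_sum_map_apexWeight_edges (g - 1) 2 hc hnone
    lia
  · have hlength : g ≤ c.length := by
      exact_mod_cast hg.trans (egirth_le_length_of_none_notMem_support hc hnone)
    rw [sum_map_apexWeight_edges_of_none_notMem_support _ _ hnone]
    lia

theorem phi_joinK1_mul_two_mul_le [Fintype V] {g : ℕ} (hg : (g : ℕ∞) ≤ H.egirth) :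
    phi (joinK1 H) * (2 * g) ≤ (g - 1) * Fintype.card V + 2 * ecard H :=
  (phi_mul_le_sum_weight _ fun _ _ hc ↦ two_mul_le_sum_map_apexWeight_edges hg hc).trans_eq
    (sum_apexWeight H (g - 1) 2)

end Join

theorem card_mul_eq_two_mul_ecard {V : Type*} [Fintype V] {d : ℕ} (H : SimpleGraph V)
    (hreg : ∀ v : V, Nat.card (H.neighborSet v) = d) : Fintype.card V * d = 2 * ecard H := by
  have hdeg : ∀ v, H.degree v = d := fun v ↦ by
    rw [← hreg v, Nat.card_eq_fintype_card, card_neighborSet_eq_degree]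
  rw [ecard, Nat.card_eq_fintype_card, ← edgeFinset_card, ← sum_degrees_eq_twice_card_edges]
  simp [hdeg]

theorem phi_joinK1_regular_girth_general {V : Type*} [Fintype V] (d g : ℕ) (H : SimpleGraph V)
    (hdeg : Fintype.card V * d ≤ 2 * ecard H) (hgirth : (g : ℕ∞) ≤ H.egirth) :
    phi (joinK1 H) * d * g ≤ ecard H * (d + g - 1) := by
  rcases g with _ | k
  · simp
  have hphi : phi (joinK1 H) * (2 * (k + 1)) ≤ k * Fintype.card V + 2 * ecard H :=
    phi_joinK1_mul_two_mul_le hgirth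
  refine Nat.le_of_mul_le_mul_left ?_ two_pos
  calc 2 * (phi (joinK1 H) * d * (k + 1))
      = phi (joinK1 H) * (2 * (k + 1)) * d := by ring
    _ ≤ (k * Fintype.card V + 2 * ecard H) * d := by gcongr
    _ = k * (Fintype.card V * d) + 2 * ecard H * d := by ring
    _ ≤ k * (2 * ecard H) + 2 * ecard H * d := by gcongr
    _ = 2 * (ecard H * (d + (k + 1) - 1)) := by
      rw [← Nat.add_assoc, Nat.add_sub_cancel]
      ring

/-- If `H` is `d`-regular (`d ≥ 2`) with girth `g` (`g ≥ 3`), then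
`φ(K₁ ∇ H) · d · g ≤ e(H) · (d + g - 1)`. -/
theorem phi_joinK1_regular_girth {V : Type*} [Fintype V] (d g : ℕ) (hd : 2 ≤ d)
    (hg : 3 ≤ g) (H : SimpleGraph V) (hreg : ∀ v : V, Nat.card (H.neighborSet v) = d)
    (hgirth : H.girth = (g : ℕ∞)) :
    phi (joinK1 H) * d * g ≤ ecard H * (d + g - 1) := by
  refine phi_joinK1_regular_girth_general d g H (card_mul_eq_two_mul_ecard H hreg).le ?_
  exact hgirth ▸ H.egirth.natCast_toNat_le_self

end PaperEDC
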